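/- arXiv:1904.08698 — 8 statements merged into one kernel-verified Lean document; each statement's English description precedes it below -/
import Mathlib

section
/- Let n ≥ 2 be a natural number and let δ, ε, C be positive real numbers. Let h : ℝ → ℝ be continuous with h(s) > 0 for all s ≥ ε, and suppose h is integrable on [ε, ∞) with C · ∫_ε^∞ h(s) ds > 4δ + (n + 4δ(ε+1) − 1)/ε. Then there do not exist functions m, φ : ℝ → ℝ such that φ is differentiable on [ε, ∞) with φ'(t) ≤ −m(t)²/(n−1) − C·h(t) for all t ≥ ε, φ(t) ≥ −4δ for all t ≥ ε, and φ(ε) ≤ (n + 4δ(ε+1) − 1)/ε. -/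
open MeasureTheory Set

/-!
The quadratic term of the Riccati inequality only helps: dropping it leaves `φ' ≤ -C h`, so `φ`
loses at least `C ∫_ε^∞ h` on `[ε, ∞)`. By hypothesis this exceeds the gap between its initial
upper bound and its lower bound.
-/

theorem sub_le_integral_Ioi_of_hasDeriv_right_of_le {f f' g : ℝ → ℝ} {a c : ℝ}
    (hcont : ContinuousOn f (Ici a))
    (hderiv : ∀ t ∈ Ioi a, HasDerivWithinAt f (f' t) (Ioi t) t)
    (hle : ∀ t ∈ Ioi a, f' t ≤ g t) (hint : IntegrableOn g (Ioi a))
    (hlower : ∃ᶠ t in Filter.atTop, c ≤ f t) :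
    c - f a ≤ ∫ t in Ioi a, g t := by
  refine ge_of_tendsto_of_frequently
    (intervalIntegral_tendsto_integral_Ioi a hint Filter.tendsto_id) ?_
  refine (hlower.and_eventually (Filter.eventually_ge_atTop a)).mono fun b ⟨hcb, hab⟩ ↦ ?_
  have hintIcc : IntegrableOn g (Icc a b) :=
    (integrableOn_Icc_iff_integrableOn_Ioc).mpr (hint.mono_set Ioc_subset_Ioi_self)
  calc c - f a ≤ f b - f a := sub_le_sub_right hcb _
    _ ≤ ∫ t in a..b, g t :=
      intervalIntegral.sub_le_integral_of_hasDeriv_right_of_le hab (hcont.mono Icc_subset_Ici_self)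
        (fun t ht ↦ hderiv t ht.1) hintIcc (fun t ht ↦ hle t ht.1)

theorem stmt_0_general {k a lower upper : ℝ} (hk : 0 < k) {q : ℝ → ℝ}
    (hint : IntegrableOn q (Ici a)) (hbig : upper - lower < ∫ s in Ici a, q s) :
    ¬ ∃ m φ φ' : ℝ → ℝ,
      (∀ t ∈ Ici a, HasDerivWithinAt φ (φ' t) (Ici a) t) ∧
      (∀ t, a ≤ t → φ' t ≤ -(m t) ^ 2 / k - q t) ∧
      (∀ t, a ≤ t → lower ≤ φ t) ∧
      φ a ≤ upper := by
  rintro ⟨m, φ, φ', hderiv, hriccati, hlower, hupper⟩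
  have hdecay : ∀ t ∈ Ioi a, φ' t ≤ -q t := fun t ht ↦ by
    have hsq : 0 ≤ (m t) ^ 2 / k := by positivity
    have hφ' := hriccati t ht.le
    rw [neg_div] at hφ'
    linarith
  have hloss : lower - φ a ≤ ∫ t in Ioi a, -q t :=
    sub_le_integral_Ioi_of_hasDeriv_right_of_le (fun t ht ↦ (hderiv t ht).continuousWithinAt)
      (fun t ht ↦ (hderiv t (Ioi_subset_Ici_self ht)).mono (Ioi_subset_Ici ht.le)) hdecay
      (hint.mono_set Ioi_subset_Ici_self).neg
      ((Filter.eventually_ge_atTop a).mono hlower).frequently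
  rw [integral_neg, ← integral_Ici_eq_integral_Ioi] at hloss
  linarith

/-- Analytic core of Theorem 1.5: the Riccati inequality for the f-mean curvature `φ`,
together with the two-sided comparison bounds, contradicts
`C · ∫_ε^∞ h > 4δ + (n + 4δ(ε+1) − 1)/ε`. -/
theorem stmt_0 (n : ℕ) (hn : 2 ≤ n) (δ ε C : ℝ) (hδ : 0 < δ) (hε : 0 < ε) (hC : 0 < C)
    (h : ℝ → ℝ) (hcont : Continuous h) (hpos : ∀ s, ε ≤ s → 0 < h s)
    (hint : IntegrableOn h (Ici ε))
    (hbig : 4 * δ + ((n : ℝ) + 4 * δ * (ε + 1) - 1) / ε < C * ∫ s in Ici ε, h s) :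
    ¬ ∃ m φ φ' : ℝ → ℝ,
      (∀ t ∈ Ici ε, HasDerivWithinAt φ (φ' t) (Ici ε) t) ∧
      (∀ t, ε ≤ t → φ' t ≤ -(m t) ^ 2 / ((n : ℝ) - 1) - C * h t) ∧
      (∀ t, ε ≤ t → -(4 * δ) ≤ φ t) ∧
      φ ε ≤ ((n : ℝ) + 4 * δ * (ε + 1) - 1) / ε :=
  stmt_0_general (sub_pos.mpr (Nat.one_lt_cast.mpr hn)) (hint.const_mul C) <| by
    rwa [integral_const_mul, sub_neg_eq_add, add_comm]
end

section
/- Let n ≥ 2 be a natural number, k > 0 a real number, and let ε, C be positive real numbers. Let h : ℝ → ℝ be continuous with h(s) > 0 for all s ≥ ε, and suppose h is integrable on [ε, ∞) with C · ∫_ε^∞ h(s) ds > (n + k − 1)/ε. Then there does not exist a function φ : ℝ → ℝ that is differentiable on [ε, ∞) with φ'(t) ≤ −φ(t)²/(n+k−1) − C·h(t) for all t ≥ ε, φ(t) ≥ 0 for all t ≥ ε, and φ(ε) ≤ (n + k − 1)/ε. -/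
open MeasureTheory Set

/-! A nonnegative function cannot drop by more than its initial value, so along the whole ray the
decay rate has integral at most `φ ε`. The Riccati inequality already forces `φ` to decay at rate
at least `C * h`, since its quadratic term only speeds up the decay, and then
`C * ∫ h ≤ φ ε ≤ (n + k - 1) / ε`. -/

open Filter in
theorem integral_Ioi_le_sub_of_hasDeriv_right_of_le {F F' g : ℝ → ℝ} {a b : ℝ}
    (hcont : ContinuousOn F (Ici a))
    (hderiv : ∀ t ∈ Ioi a, HasDerivWithinAt F (F' t) (Ioi t) t)
    (hint : IntegrableOn g (Ioi a)) (hle : ∀ t ∈ Ioi a, g t ≤ F' t)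
    (hbound : ∃ᶠ t in atTop, F t ≤ b) :
    ∫ t in Ioi a, g t ≤ b - F a := by
  have integral_le_increment : ∀ T, a ≤ T → ∫ t in a..T, g t ≤ F T - F a := fun T hT =>
    intervalIntegral.integral_le_sub_of_hasDeriv_right_of_le hT
      (hcont.mono Icc_subset_Ici_self) (fun t ht => hderiv t ht.1)
      ((Iff.mpr integrableOn_Ici_iff_integrableOn_Ioi hint).mono_set Icc_subset_Ici_self)
      (fun t ht => hle t ht.1)
  refine le_of_tendsto_of_frequently (intervalIntegral_tendsto_integral_Ioi a hint tendsto_id) ?_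
  refine (hbound.and_eventually (eventually_ge_atTop a)).mono fun T ⟨hFT, haT⟩ => ?_
  exact (integral_le_increment T haT).trans (sub_le_sub_right hFT _)

open Filter in
theorem stmt_2_general {a b : ℝ} {g : ℝ → ℝ} (hint : IntegrableOn g (Ici a))
    (hbig : b < ∫ s in Ici a, g s) :
    ¬ ∃ φ φ' : ℝ → ℝ,
      (∀ t ∈ Ici a, HasDerivWithinAt φ (φ' t) (Ici a) t) ∧
      (∀ t, a ≤ t → φ' t ≤ -g t) ∧
      (∃ᶠ t in atTop, 0 ≤ φ t) ∧
      φ a ≤ b := by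
  rintro ⟨φ, φ', hderiv, hdecay, hnonneg, hinit⟩
  have integral_le_initial : ∫ s in Ioi a, g s ≤ 0 - -φ a :=
    integral_Ioi_le_sub_of_hasDeriv_right_of_le (F := fun t => -φ t)
      (fun t ht => (hderiv t ht).continuousWithinAt.neg)
      (fun t ht => ((hderiv t (Ioi_subset_Ici_self ht)).mono (Ioi_subset_Ici (le_of_lt ht))).neg)
      (hint.mono_set Ioi_subset_Ici_self) (fun t ht => le_neg_of_le_neg (hdecay t (le_of_lt ht)))
      (hnonneg.mono fun _ => neg_nonpos.mpr)
  rw [integral_Ici_eq_integral_Ioi] at hbig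
  linarith

theorem neg_sq_div_sub_le_neg {m : ℝ} (hm : 0 ≤ m) (x c : ℝ) : -x ^ 2 / m - c ≤ -c := by
  have quadratic_nonneg : 0 ≤ x ^ 2 / m := by positivity
  rw [neg_div]
  linarith

/-- Analytic core of Theorem 1.9: the Riccati inequality for the f-mean curvature `φ`
in terms of the k-Bakry–Emery Ricci tensor, together with the comparison bounds,
contradicts `C · ∫_ε^∞ h > (n + k − 1)/ε`. -/
theorem stmt_2 (n : ℕ) (hn : 2 ≤ n) (k ε C : ℝ) (hk : 0 < k) (hε : 0 < ε) (hC : 0 < C)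
    (h : ℝ → ℝ) (hcont : Continuous h) (hpos : ∀ s, ε ≤ s → 0 < h s)
    (hint : IntegrableOn h (Ici ε))
    (hbig : ((n : ℝ) + k - 1) / ε < C * ∫ s in Ici ε, h s) :
    ¬ ∃ φ φ' : ℝ → ℝ,
      (∀ t ∈ Ici ε, HasDerivWithinAt φ (φ' t) (Ici ε) t) ∧
      (∀ t, ε ≤ t → φ' t ≤ -(φ t) ^ 2 / ((n : ℝ) + k - 1) - C * h t) ∧
      (∀ t, ε ≤ t → 0 ≤ φ t) ∧
      φ ε ≤ ((n : ℝ) + k - 1) / ε := by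
  rintro ⟨φ, φ', hderiv, hriccati, hnonneg, hinit⟩
  have two_le_dim : (2 : ℝ) ≤ n := mod_cast hn
  exact stmt_2_general (hint.const_mul C) (by rwa [integral_const_mul])
    ⟨φ, φ', hderiv, fun t ht => (hriccati t ht).trans (neg_sq_div_sub_le_neg (by linarith) _ _),
      (Filter.eventually_ge_atTop ε).frequently.mono hnonneg, hinit⟩
end

section
/- Let n ≥ 2 be a natural number, a ≥ 0, r₀ > 0, b > 2, and let C be a real number with C > (2a·r₀ + (n−1)(b−2))·r₀^{b−2}·(b−1)^b/(b−2)^{b−1}. Then there do not exist functions m, φ : ℝ → ℝ such that φ is differentiable on (0, ∞) with φ'(t) ≤ −m(t)²/(n−1) − C·(r₀+t)^{−b} for all t > 0, and −a ≤ φ(t) ≤ (n−1)/t + a for all t > 0. -/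
open MeasureTheory Set

/-!
Discarding the square in the Riccati inequality leaves `φ' ≤ -C (r₀ + t) ^ (-b)`. Integrated from
`s` to `∞` against the lower bound `-a ≤ φ`, it forces
`C ≤ (φ s + a) (b - 1) (r₀ + s) ^ (b - 1)`, and the upper bound gives `φ s + a ≤ (n - 1) / s + 2a`.
The choice `s = r₀ / (b - 2)` minimizes `(r₀ + s) ^ (b - 1) / s` and turns the right-hand side into
the stated constant.
-/

open Filter Topology

-- Comparing increments avoids integrating `f'` up to infinity, where it need not be integrable.
theorem sub_le_sub_of_deriv_right_le_of_tendsto_atTop {f f' g g' : ℝ → ℝ} {s c l : ℝ}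
    (hf : ContinuousOn f (Ici s)) (hf' : ∀ t ∈ Ici s, HasDerivWithinAt f (f' t) (Ici t) t)
    (hg : ContinuousOn g (Ici s)) (hg' : ∀ t ∈ Ici s, HasDerivWithinAt g (g' t) (Ici t) t)
    (hle : ∀ t ∈ Ici s, f' t ≤ g' t) (hlim : Tendsto g atTop (𝓝 l))
    (hc : ∃ᶠ t in atTop, c ≤ f t) : c - f s ≤ l - g s := by
  have growth : ∀ t ∈ Ici s, f t ≤ g t + (f s - g s) := fun t ht ↦
    image_le_of_deriv_right_le_deriv_boundary (B := fun x ↦ g x + (f s - g s))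
      (hf.mono Icc_subset_Ici_self) (fun x hx ↦ hf' x hx.1) (by simp)
      ((hg.mono Icc_subset_Ici_self).add continuousOn_const)
      (fun x hx ↦ (hg' x hx.1).add_const _) (fun x hx ↦ hle x hx.1) (right_mem_Icc.2 ht)
  have hc_le : c ≤ l + (f s - g s) :=
    ge_of_tendsto_of_frequently (hlim.add_const _) <|
      (hc.and_eventually (eventually_ge_atTop s)).mono fun t ht ↦ ht.1.trans (growth t ht.2)
  linarith

theorem hasDerivAt_const_add_rpow_one_sub (C : ℝ) {r b t : ℝ} (hb : b ≠ 1) (ht : r + t ≠ 0) :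
    HasDerivAt (fun x ↦ C / (b - 1) * (r + x) ^ (1 - b)) (-C * (r + t) ^ (-b)) t := by
  have hpow := ((hasDerivAt_id t).const_add r).rpow_const (p := 1 - b) (Or.inl ht)
  refine (hpow.const_mul (C / (b - 1))).congr_deriv ?_
  have hb' : b - 1 ≠ 0 := sub_ne_zero.2 hb
  rw [show 1 - b - 1 = -b by ring]
  simp only [id_eq]
  field_simp
  ring

theorem tendsto_const_add_rpow_one_sub_atTop (r : ℝ) {b : ℝ} (hb : 1 < b) :
    Tendsto (fun x : ℝ ↦ (r + x) ^ (1 - b)) atTop (𝓝 0) := by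
  simpa only [neg_sub, Function.comp_def, id_eq] using
    (tendsto_rpow_neg_atTop (sub_pos.2 hb)).comp (tendsto_atTop_add_const_left _ r tendsto_id)

theorem le_mul_rpow_of_deriv_le_neg_rpow {f f' : ℝ → ℝ} {r s b c C : ℝ}
    (hb : 1 < b) (hs : 0 < r + s) (hf : ∀ t ∈ Ici s, HasDerivAt f (f' t) t)
    (hle : ∀ t ∈ Ici s, f' t ≤ -C * (r + t) ^ (-b)) (hc : ∃ᶠ t in atTop, c ≤ f t) :
    C ≤ (f s - c) * (b - 1) * (r + s) ^ (b - 1) := by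
  have hprim : ∀ t ∈ Ici s,
      HasDerivAt (fun x ↦ C / (b - 1) * (r + x) ^ (1 - b)) (-C * (r + t) ^ (-b)) t :=
    fun t ht ↦ hasDerivAt_const_add_rpow_one_sub C hb.ne'
      (hs.trans_le (add_le_add_right (mem_Ici.1 ht) r)).ne'
  have htail : c - f s ≤ C / (b - 1) * 0 - C / (b - 1) * (r + s) ^ (1 - b) :=
    sub_le_sub_of_deriv_right_le_of_tendsto_atTop
      (fun t ht ↦ (hf t ht).continuousAt.continuousWithinAt)
      (fun t ht ↦ (hf t ht).hasDerivWithinAt)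
      (fun t ht ↦ (hprim t ht).continuousAt.continuousWithinAt)
      (fun t ht ↦ (hprim t ht).hasDerivWithinAt) hle
      ((tendsto_const_add_rpow_one_sub_atTop r hb).const_mul _) hc
  have hquot : C / ((b - 1) * (r + s) ^ (b - 1)) ≤ f s - c := by
    rw [← div_div, div_eq_mul_inv _ ((r + s) ^ (b - 1)), ← Real.rpow_neg hs.le, neg_sub]
    linarith
  rw [mul_assoc]
  exact (div_le_iff₀ (mul_pos (sub_pos.2 hb) (Real.rpow_pos_of_pos hs _))).1 hquot

theorem mul_add_rpow_at_div_sub_two (a k : ℝ) {r b : ℝ} (hr : 0 < r) (hb : 2 < b) :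
    (k / (r / (b - 2)) + 2 * a) * (b - 1) * (r + r / (b - 2)) ^ (b - 1) =
      (2 * a * r + k * (b - 2)) * r ^ (b - 2) * (b - 1) ^ b / (b - 2) ^ (b - 1) := by
  have hb1 : 0 < b - 1 := by linarith
  have hb2 : 0 < b - 2 := sub_pos.2 hb
  have hbase : r + r / (b - 2) = r * (b - 1) / (b - 2) := by
    field_simp
    ring
  have hr_pow : r ^ (b - 1) = r ^ (b - 2) * r := by
    rw [← Real.rpow_add_one hr.ne']
    ring_nf
  have hb_pow : (b - 1) ^ b = (b - 1) ^ (b - 1) * (b - 1) := by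
    rw [← Real.rpow_add_one hb1.ne', sub_add_cancel]
  rw [hbase, Real.div_rpow (by positivity) hb2.le, Real.mul_rpow hr.le hb1.le, hr_pow, hb_pow]
  field_simp
  ring

theorem stmt_5_general {n a r₀ b C : ℝ} (hn : 1 < n) (hr₀ : 0 < r₀) (hb : 2 < b)
    (hC : (2 * a * r₀ + (n - 1) * (b - 2)) * r₀ ^ (b - 2) * (b - 1) ^ b / (b - 2) ^ (b - 1) < C)
    {m φ φ' : ℝ → ℝ} (hφ : ∀ t ∈ Ici (r₀ / (b - 2)), HasDerivAt φ (φ' t) t)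
    (hriccati : ∀ t ∈ Ici (r₀ / (b - 2)),
      φ' t ≤ -(m t) ^ 2 / (n - 1) - C * (r₀ + t) ^ (-b))
    (hlower : ∃ᶠ t in atTop, -a ≤ φ t) :
    (n - 1) / (r₀ / (b - 2)) + a < φ (r₀ / (b - 2)) := by
  have hb1 : 0 < b - 1 := by linarith
  have hε : 0 < r₀ / (b - 2) := div_pos hr₀ (sub_pos.2 hb)
  have hdecay : ∀ t ∈ Ici (r₀ / (b - 2)), φ' t ≤ -C * (r₀ + t) ^ (-b) := fun t ht ↦ by
    have hsq : 0 ≤ (m t) ^ 2 / (n - 1) := div_nonneg (sq_nonneg _) (sub_pos.2 hn).le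
    linarith [hriccati t ht, neg_div (n - 1) ((m t) ^ 2)]
  have hC_le := le_mul_rpow_of_deriv_le_neg_rpow (by linarith) (add_pos hr₀ hε) hφ hdecay hlower
  rw [← mul_add_rpow_at_div_sub_two a (n - 1) hr₀ hb] at hC
  have hfactor : 0 ≤ (b - 1) * (r₀ + r₀ / (b - 2)) ^ (b - 1) := by positivity
  have hgap : (n - 1) / (r₀ / (b - 2)) + 2 * a < φ (r₀ / (b - 2)) - -a := by
    refine lt_of_mul_lt_mul_right ?_ hfactor
    simpa only [mul_assoc] using hC.trans_le hC_le
  linarith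

/-- Analytic core of Corollary 1.8 for `b > 2`: the Riccati inequality with
`h(t) = (r₀+t)^{−b}` on `(0, ∞)` and the bounds `−a ≤ φ(t) ≤ (n−1)/t + a` contradict
`C > (2ar₀ + (n−1)(b−2))·r₀^{b−2}·(b−1)^b/(b−2)^{b−1}`. -/
theorem stmt_5 (n : ℕ) (hn : 2 ≤ n) (a r₀ b C : ℝ) (ha : 0 ≤ a) (hr₀ : 0 < r₀) (hb : 2 < b)
    (hC : (2 * a * r₀ + ((n : ℝ) - 1) * (b - 2)) * r₀ ^ (b - 2) * (b - 1) ^ b / (b - 2) ^ (b - 1)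
      < C) :
    ¬ ∃ m φ φ' : ℝ → ℝ,
      (∀ t ∈ Ioi (0 : ℝ), HasDerivAt φ (φ' t) t) ∧
      (∀ t, 0 < t → φ' t ≤ -(m t) ^ 2 / ((n : ℝ) - 1) - C * (r₀ + t) ^ (-b)) ∧
      (∀ t, 0 < t → -a ≤ φ t ∧ φ t ≤ ((n : ℝ) - 1) / t + a) := by
  rintro ⟨m, φ, φ', hφ, hriccati, hbounds⟩
  have hε : 0 < r₀ / (b - 2) := div_pos hr₀ (sub_pos.2 hb)
  refine (stmt_5_general (by exact_mod_cast hn) hr₀ hb hC (fun t ht ↦ hφ t (hε.trans_le ht))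
    (fun t ht ↦ hriccati t (hε.trans_le ht)) ?_).not_ge (hbounds _ hε).2
  exact ((eventually_gt_atTop 0).mono fun t ht ↦ (hbounds t ht).1).frequently
end

section
/- Let n ≥ 2 be a natural number, a ≥ 0, and let ε, r₀ be positive real numbers, 1 < b ≤ 2, and let C be a real number with C > (2a + (n−1)/ε)·(b−1)·(r₀+ε)^{b−1}. Then there do not exist functions m, φ : ℝ → ℝ such that φ is differentiable on [ε, ∞) with φ'(t) ≤ −m(t)²/(n−1) − C·(r₀+t)^{−b} for all t ≥ ε, φ(t) ≥ −a for all t ≥ ε, and φ(ε) ≤ (n−1)/ε + a. -/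
open MeasureTheory Set

/-! Discarding the square `m²`, the Riccati inequality says that `φ` decreases at least at rate
`C (r₀ + t)^{-b}`. Hence over `[ε, ∞)` it falls by at least
`C ∫_ε^∞ (r₀ + t)^{-b} dt = C / ((b - 1) (r₀ + ε)^{b - 1})`, which for large `C` exceeds the
distance between the upper bound on `φ ε` and the lower bound on `φ`. -/

open Filter

theorem integral_Ioi_comp_add_left {E : Type*} [NormedAddCommGroup E] [NormedSpace ℝ E]
    (g : ℝ → E) (r c : ℝ) : ∫ t in Ioi c, g (r + t) = ∫ t in Ioi (r + c), g t := by
  simpa only [preimage_const_add_Ioi, add_sub_cancel_left] using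
    (measurePreserving_add_left volume r).setIntegral_preimage_emb
      (measurableEmbedding_addLeft r) g (Ioi (r + c))

theorem integral_Ioi_const_add_rpow_of_lt {p r c : ℝ} (hp : p < -1) (hc : 0 < r + c) :
    ∫ t in Ioi c, (r + t) ^ p = -(r + c) ^ (p + 1) / (p + 1) := by
  rw [integral_Ioi_comp_add_left (fun t : ℝ ↦ t ^ p), integral_Ioi_rpow_of_lt hp hc]

theorem integral_Ioi_le_sub_of_hasDerivWithinAt_le_neg {φ φ' h : ℝ → ℝ} {c α : ℝ}
    (hcont : ContinuousOn φ (Ici c))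
    (hderiv : ∀ t ∈ Ioi c, HasDerivWithinAt φ (φ' t) (Ioi t) t)
    (hint : IntegrableOn h (Ioi c)) (hle : ∀ t ∈ Ioi c, φ' t ≤ -h t)
    (hα : ∃ᶠ t in atTop, α ≤ φ t) :
    ∫ t in Ioi c, h t ≤ φ c - α := by
  have integral_le : ∀ T, c ≤ T → ∫ t in c..T, h t ≤ φ c - φ T := fun T hT ↦ by
    have hsub : φ T - φ c ≤ ∫ t in c..T, -h t :=
      intervalIntegral.sub_le_integral_of_hasDeriv_right_of_le hT (hcont.mono Icc_subset_Ici_self)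
        (fun t ht ↦ hderiv t ht.1)
        ((integrableOn_Ici_iff_integrableOn_Ioi (μ := volume)).2 hint |>.mono_set
          Icc_subset_Ici_self).neg
        (fun t ht ↦ hle t ht.1)
    rw [intervalIntegral.integral_neg] at hsub
    linarith
  refine le_of_tendsto_of_frequently
    (intervalIntegral_tendsto_integral_Ioi c hint tendsto_id) ?_
  refine (hα.and_eventually (eventually_ge_atTop c)).mono fun T ⟨hαT, hT⟩ ↦ ?_
  exact (integral_le T hT).trans (sub_le_sub_left hαT _)

theorem stmt_6_general {k r₀ ε b C α β : ℝ} (hk : 0 < k) (hε : 0 < r₀ + ε) (hb : 1 < b)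
    (hC : (β - α) * (b - 1) * (r₀ + ε) ^ (b - 1) < C) :
    ¬ ∃ m φ φ' : ℝ → ℝ,
      (∀ t ∈ Ici ε, HasDerivWithinAt φ (φ' t) (Ici ε) t) ∧
      (∀ t, ε ≤ t → φ' t ≤ -(m t) ^ 2 / k - C * (r₀ + t) ^ (-b)) ∧
      (∀ t, ε ≤ t → α ≤ φ t) ∧
      φ ε ≤ β := by
  rintro ⟨m, φ, φ', hderiv, hriccati, hlower, hupper⟩
  have hint : IntegrableOn (fun t ↦ (r₀ + t) ^ (-b)) (Ioi ε) := by
    simpa only [add_comm r₀] using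
      integrableOn_add_rpow_Ioi_of_lt (neg_lt_neg hb) (neg_lt_iff_pos_add'.2 hε)
  have hdecay : ∀ t ∈ Ioi ε, φ' t ≤ -(C * (r₀ + t) ^ (-b)) := fun t ht ↦ by
    have hsq : 0 ≤ m t ^ 2 / k := by positivity
    linarith [hriccati t (le_of_lt ht), neg_div k (m t ^ 2)]
  have hdrop : ∫ t in Ioi ε, C * (r₀ + t) ^ (-b) ≤ φ ε - α :=
    integral_Ioi_le_sub_of_hasDerivWithinAt_le_neg
      (fun t ht ↦ (hderiv t ht).continuousWithinAt)
      (fun t ht ↦ (hderiv t (Ioi_subset_Ici_self ht)).mono (Ioi_subset_Ici (le_of_lt ht)))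
      (hint.const_mul C) hdecay ((eventually_ge_atTop ε).mono hlower).frequently
  have hvalue : ∫ t in Ioi ε, C * (r₀ + t) ^ (-b) = C / ((b - 1) * (r₀ + ε) ^ (b - 1)) := by
    rw [integral_const_mul, integral_Ioi_const_add_rpow_of_lt (neg_lt_neg hb) hε,
      show -b + 1 = -(b - 1) by ring, Real.rpow_neg hε.le]
    field_simp
  have hlarge : β - α < C / ((b - 1) * (r₀ + ε) ^ (b - 1)) := by
    rwa [lt_div_iff₀ (mul_pos (sub_pos.2 hb) (Real.rpow_pos_of_pos hε _)), ← mul_assoc]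
  linarith

/-- Analytic core of Corollary 1.8 for `1 < b ≤ 2`: the Riccati inequality with
`h(t) = (r₀+t)^{−b}` and the comparison bounds under `∂_t f ≥ −a` contradict
`C > (2a + (n−1)/ε)·(b−1)·(r₀+ε)^{b−1}`. -/
theorem stmt_6 (n : ℕ) (hn : 2 ≤ n) (a ε r₀ b C : ℝ) (ha : 0 ≤ a) (hε : 0 < ε)
    (hr₀ : 0 < r₀) (hb1 : 1 < b) (hb2 : b ≤ 2)
    (hC : (2 * a + ((n : ℝ) - 1) / ε) * (b - 1) * (r₀ + ε) ^ (b - 1) < C) :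
    ¬ ∃ m φ φ' : ℝ → ℝ,
      (∀ t ∈ Ici ε, HasDerivWithinAt φ (φ' t) (Ici ε) t) ∧
      (∀ t, ε ≤ t → φ' t ≤ -(m t) ^ 2 / ((n : ℝ) - 1) - C * (r₀ + t) ^ (-b)) ∧
      (∀ t, ε ≤ t → -a ≤ φ t) ∧
      φ ε ≤ ((n : ℝ) - 1) / ε + a := by
  have hn' : (1 : ℝ) < n := by exact_mod_cast hn
  exact stmt_6_general (sub_pos.2 hn') (add_pos hr₀ hε) hb1 (by linarith)
end

section
/- Let n ≥ 2 be a natural number, k > 0 a real number, r₀ > 0, b > 2, and let C be a real number with C > (n+k−1)·(b−1)^b/(b−2)^{b−2}·r₀^{b−2}. Then there does not exist a function φ : ℝ → ℝ that is differentiable on (0, ∞) with φ'(t) ≤ −φ(t)²/(n+k−1) − C·(r₀+t)^{−b} for all t > 0, and 0 ≤ φ(t) ≤ (n+k−1)/t for all t > 0. -/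
open MeasureTheory Set

/-!
The quadratic term of the Riccati inequality only helps `φ` to decrease, so drop it and integrate
`φ' ≤ -C (r₀ + t) ^ (-b)` over `[ε, ∞)`. As `φ` stays nonnegative, its value at `ε` pays for the
whole tail: `C / (b - 1) * (r₀ + ε) ^ (1 - b) ≤ φ ε ≤ (n + k - 1) / ε`. The resulting bound on `C`
is strongest at the minimizer `ε = r₀ / (b - 2)` of `(r₀ + ε) ^ (b - 1) / ε`.
-/

section TailComparison

open Filter Topology

theorem le_of_hasDerivAt_le_of_tendsto {f f' g g' : ℝ → ℝ} {a l : ℝ}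
    (hf : ∀ t ∈ Ici a, HasDerivAt f (f' t) t) (hg : ∀ t ∈ Ici a, HasDerivAt g (g' t) t)
    (hle : ∀ t ∈ Ioi a, f' t ≤ g' t) (hfl : ∀ᶠ t in atTop, l ≤ f t)
    (hgl : Tendsto g atTop (𝓝 l)) : g a ≤ f a := by
  have hd : ∀ t ∈ Ici a, HasDerivAt (f - g) (f' t - g' t) t := fun t ht ↦ (hf t ht).sub (hg t ht)
  have hanti : AntitoneOn (f - g) (Ici a) := by
    refine antitoneOn_of_hasDerivWithinAt_nonpos (f' := f' - g') (convex_Ici a)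
      (fun t ht ↦ (hd t ht).continuousAt.continuousWithinAt)
      (fun t ht ↦ (hd t (interior_subset ht)).hasDerivWithinAt) fun t ht ↦ ?_
    rw [interior_Ici] at ht
    exact sub_nonpos.2 (hle t ht)
  have hlim : Tendsto (fun t ↦ l - g t) atTop (𝓝 0) := by
    simpa only [sub_self] using hgl.const_sub l
  refine sub_nonneg.1 (le_of_tendsto hlim ?_)
  filter_upwards [hfl, eventually_ge_atTop a] with t hlt hat
  calc l - g t ≤ f t - g t := by gcongr
    _ ≤ f a - g a := hanti self_mem_Ici hat hat

theorem hasDerivAt_mul_const_add_rpow_one_sub {b r t : ℝ} (hb : b ≠ 1) (C : ℝ)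
    (ht : r + t ≠ 0) :
    HasDerivAt (fun t ↦ C / (b - 1) * (r + t) ^ (1 - b)) (-(C * (r + t) ^ (-b))) t := by
  have hb' : b - 1 ≠ 0 := sub_ne_zero.2 hb
  refine ((((hasDerivAt_id' t).const_add r).rpow_const (p := 1 - b)
    (Or.inl ht)).const_mul (C / (b - 1))).congr_deriv ?_
  rw [show 1 - b - 1 = -b by ring]
  field_simp
  ring

theorem tendsto_mul_const_add_rpow_one_sub_atTop {b : ℝ} (hb : 1 < b) (c r : ℝ) :
    Tendsto (fun t ↦ c * (r + t) ^ (1 - b)) atTop (𝓝 0) := by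
  have hpow : Tendsto (fun t ↦ (r + t) ^ (-(b - 1))) atTop (𝓝 0) :=
    (tendsto_rpow_neg_atTop (sub_pos.2 hb)).comp (tendsto_atTop_add_const_left _ r tendsto_id)
  simpa only [neg_sub, mul_zero] using hpow.const_mul c

theorem le_mul_const_add_rpow_of_hasDerivAt_le {b r C a : ℝ} {φ φ' : ℝ → ℝ}
    (hb : 1 < b) (ha : 0 < r + a) (hφ : ∀ t ∈ Ici a, HasDerivAt φ (φ' t) t)
    (hφ' : ∀ t ∈ Ioi a, φ' t ≤ -(C * (r + t) ^ (-b))) (hφ₀ : ∀ᶠ t in atTop, 0 ≤ φ t) :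
    C ≤ φ a * (b - 1) * (r + a) ^ (b - 1) := by
  have htail : C / (b - 1) * (r + a) ^ (1 - b) ≤ φ a := by
    refine le_of_hasDerivAt_le_of_tendsto hφ (fun t (ht : a ≤ t) ↦ ?_) hφ' hφ₀
      (tendsto_mul_const_add_rpow_one_sub_atTop hb _ r)
    exact hasDerivAt_mul_const_add_rpow_one_sub hb.ne' C (by linarith)
  rwa [← neg_sub b, Real.rpow_neg ha.le, ← div_eq_mul_inv, div_le_iff₀ (by positivity),
    div_le_iff₀ (sub_pos.2 hb), mul_right_comm] at htail

end TailComparison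

theorem div_mul_add_rpow_eq_of_two_lt {b r : ℝ} (hb : 2 < b) (hr : 0 < r) (m : ℝ) :
    m / (r / (b - 2)) * (b - 1) * (r + r / (b - 2)) ^ (b - 1) =
      m * (b - 1) ^ b / (b - 2) ^ (b - 2) * r ^ (b - 2) := by
  have hb₁ : 0 < b - 1 := by linarith
  have hb₂ : 0 < b - 2 := by linarith
  have hsum : r + r / (b - 2) = (b - 1) * (r / (b - 2)) := by field_simp; ring
  have hsplit : (r / (b - 2)) ^ (b - 1) = (r / (b - 2)) ^ (b - 2) * (r / (b - 2)) := by
    rw [← Real.rpow_add_one (by positivity)]; ring_nf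
  calc m / (r / (b - 2)) * (b - 1) * (r + r / (b - 2)) ^ (b - 1)
      = m * ((b - 1) ^ (b - 1) * (b - 1)) * (r / (b - 2)) ^ (b - 2) := by
        rw [hsum, Real.mul_rpow hb₁.le (by positivity), hsplit]
        field_simp
    _ = m * (b - 1) ^ b * (r ^ (b - 2) / (b - 2) ^ (b - 2)) := by
        rw [← Real.rpow_add_one hb₁.ne', sub_add_cancel, Real.div_rpow hr.le hb₂.le]
    _ = m * (b - 1) ^ b / (b - 2) ^ (b - 2) * r ^ (b - 2) := by ring

theorem stmt_7_general {m r₀ b C : ℝ} {φ φ' : ℝ → ℝ} (hr₀ : 0 < r₀) (hb : 2 < b)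
    (hφ : ∀ t ∈ Ioi (0 : ℝ), HasDerivAt φ (φ' t) t)
    (hφ' : ∀ t, 0 < t → φ' t ≤ -(C * (r₀ + t) ^ (-b)))
    (hbound : ∀ t, 0 < t → 0 ≤ φ t ∧ φ t ≤ m / t) :
    C ≤ m * (b - 1) ^ b / (b - 2) ^ (b - 2) * r₀ ^ (b - 2) := by
  have hb₁ : 0 < b - 1 := by linarith
  have hε : 0 < r₀ / (b - 2) := div_pos hr₀ (sub_pos.2 hb)
  calc C ≤ φ (r₀ / (b - 2)) * (b - 1) * (r₀ + r₀ / (b - 2)) ^ (b - 1) :=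
        le_mul_const_add_rpow_of_hasDerivAt_le (by linarith) (by positivity)
          (fun t ht ↦ hφ t (hε.trans_le ht)) (fun t ht ↦ hφ' t (hε.trans ht))
          ((Filter.eventually_gt_atTop 0).mono fun t ht ↦ (hbound t ht).1)
    _ ≤ m / (r₀ / (b - 2)) * (b - 1) * (r₀ + r₀ / (b - 2)) ^ (b - 1) := by
        gcongr
        exact (hbound _ hε).2
    _ = m * (b - 1) ^ b / (b - 2) ^ (b - 2) * r₀ ^ (b - 2) := div_mul_add_rpow_eq_of_two_lt hb hr₀ m

/-- Analytic core of Corollary 1.12 for `b > 2`: the Riccati inequality with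
`h(t) = (r₀+t)^{−b}` on `(0, ∞)` and the bounds `0 ≤ φ(t) ≤ (n+k−1)/t` contradict
`C > (n+k−1)·(b−1)^b/(b−2)^{b−2}·r₀^{b−2}`. -/
theorem stmt_7 (n : ℕ) (hn : 2 ≤ n) (k r₀ b C : ℝ) (hk : 0 < k) (hr₀ : 0 < r₀) (hb : 2 < b)
    (hC : ((n : ℝ) + k - 1) * (b - 1) ^ b / (b - 2) ^ (b - 2) * r₀ ^ (b - 2) < C) :
    ¬ ∃ φ φ' : ℝ → ℝ,
      (∀ t ∈ Ioi (0 : ℝ), HasDerivAt φ (φ' t) t) ∧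
      (∀ t, 0 < t → φ' t ≤ -(φ t) ^ 2 / ((n : ℝ) + k - 1) - C * (r₀ + t) ^ (-b)) ∧
      (∀ t, 0 < t → 0 ≤ φ t ∧ φ t ≤ ((n : ℝ) + k - 1) / t) := by
  rintro ⟨φ, φ', hφ, hRiccati, hbound⟩
  have hn' : (2 : ℝ) ≤ n := by exact_mod_cast hn
  have hm : 0 ≤ n + k - 1 := by linarith
  refine hC.not_ge (stmt_7_general hr₀ hb hφ (fun t ht ↦ ?_) hbound)
  have hquad : -(φ t) ^ 2 / (n + k - 1) ≤ 0 :=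
    div_nonpos_of_nonpos_of_nonneg (neg_nonpos.2 (sq_nonneg _)) hm
  linarith [hRiccati t ht]
end

section
/- Let n ≥ 2 be a natural number, H a real number, δ > 0 and t₀ > 0. Let sn : ℝ → ℝ be twice differentiable with sn''(t) = −H·sn(t) for all t, sn(0) = 0 and sn'(0) = 1, and assume sn(t) > 0 for all t ∈ (0, t₀] and that the function t ↦ sn(t)² has nonnegative first and second derivatives at every t ∈ [0, t₀]. Let f : ℝ → ℝ be twice continuously differentiable with |f(t)| ≤ δ(t+1) for all t ∈ [0, t₀]. Let m : ℝ → ℝ be differentiable on (0, t₀] with m'(t) ≤ −m(t)²/(n−1) − (n−1)H + f''(t) for all t ∈ (0, t₀], and suppose sn(t)²·m(t) → 0 as t → 0⁺. Then for every t ∈ (0, t₀], m(t) − f'(t) ≤ (1 + 4δ(t+1)/(n−1))·(n−1)·sn'(t)/sn(t). -/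
open Set Filter

/-!
Completing the square in the Riccati inequality gives `(sn² m - k sn sn')' ≤ sn² f''`. Integrating
by parts twice moves both derivatives off `f`: since `(sn²)'' ≥ 0`, a constant `c` that bounds `f`
from above on `(0, T]` satisfies `sn² f'' ≤ (sn² f' - (sn²)' (f - c))'`. Both differentiated
expressions tend to `0` at `0`, so `sn² (m - f') ≤ (k + 2 (c - f)) sn sn'` at `T`. A monotone bound
for `|f|` enters only through its value at `T`, which is taken as the constant `c`.
-/

theorem le_of_hasDerivWithinAt_le_of_tendsto_sub {F F' G G' : ℝ → ℝ} {a b : ℝ} (hab : a < b)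
    (hF : ∀ t ∈ Ioc a b, HasDerivWithinAt F (F' t) (Ioc a b) t)
    (hG : ∀ t ∈ Ioc a b, HasDerivWithinAt G (G' t) (Ioc a b) t)
    (hle : ∀ t ∈ Ioc a b, F' t ≤ G' t)
    (hlim : Tendsto (fun t => F t - G t) (nhdsWithin a (Ioi a)) (nhds 0)) :
    F b ≤ G b := by
  have hderiv t (ht : t ∈ Ioc a b) :
      HasDerivWithinAt (fun t => F t - G t) (F' t - G' t) (Ioc a b) t :=
    (hF t ht).sub (hG t ht)
  have hanti : AntitoneOn (fun t => F t - G t) (Ioc a b) :=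
    antitoneOn_of_hasDerivWithinAt_nonpos (convex_Ioc a b)
      (fun t ht => (hderiv t ht).continuousWithinAt)
      (fun t ht => (hderiv t (interior_subset ht)).mono interior_subset)
      (fun t ht => sub_nonpos.2 (hle t (interior_subset ht)))
  refine sub_nonpos.1 (ge_of_tendsto hlim ?_)
  filter_upwards [Ioc_mem_nhdsGT hab] with s hs
  exact hanti hs (right_mem_Ioc.2 hab) hs.2

section Derivatives

variable {g g' u u' : ℝ → ℝ} {s : Set ℝ} {t : ℝ}

theorem hasDerivWithinAt_mul_deriv_sub_deriv_mul {g'' u'' : ℝ}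
    (hg : HasDerivWithinAt g (g' t) s t) (hg' : HasDerivWithinAt g' g'' s t)
    (hu : HasDerivWithinAt u (u' t) s t) (hu' : HasDerivWithinAt u' u'' s t) :
    HasDerivWithinAt (fun x => g x * u' x - g' x * u x) (g t * u'' - g'' * u t) s t :=
  ((hg.fun_mul hu').fun_sub (hg'.fun_mul hu)).congr_deriv (by ring)

theorem hasDerivWithinAt_sq (hg : HasDerivWithinAt g (g' t) s t) :
    HasDerivWithinAt (fun x => g x ^ 2) (2 * (g t * g' t)) s t :=
  (hg.fun_pow 2).congr_deriv (by push_cast; ring)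

theorem hasDerivWithinAt_mul_deriv_of_ode {κ : ℝ} (hg : HasDerivWithinAt g (g' t) s t)
    (hg' : HasDerivWithinAt g' (-(κ * g t)) s t) :
    HasDerivWithinAt (fun x => g x * g' x) (g' t ^ 2 - κ * g t ^ 2) s t :=
  (hg.fun_mul hg').congr_deriv (by ring)

theorem deriv_sq_of_hasDerivAt (hg : HasDerivAt g (g' t) t) :
    deriv (fun x => g x ^ 2) t = 2 * (g t * g' t) :=
  ((hasDerivWithinAt_sq hg.hasDerivWithinAt).hasDerivAt univ_mem).deriv

theorem deriv_deriv_sq_of_ode {κ : ℝ} (hg : ∀ x, HasDerivAt g (g' x) x)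
    (hg' : HasDerivAt g' (-(κ * g t)) t) :
    deriv (deriv fun x => g x ^ 2) t = 2 * (g' t ^ 2 - κ * g t ^ 2) := by
  have hsq : (deriv fun x => g x ^ 2) = fun x => 2 * (g x * g' x) :=
    funext fun x => deriv_sq_of_hasDerivAt (hg x)
  have hmul := hasDerivWithinAt_mul_deriv_of_ode (s := univ)
    (hg t).hasDerivWithinAt hg'.hasDerivWithinAt
  rw [hsq]
  exact ((hmul.hasDerivAt univ_mem).const_mul 2).deriv

end Derivatives

theorem riccati_sq_mul_deriv_le {k : ℝ} (hk : 0 < k) {σ σ' κ μ μ' v : ℝ}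
    (hric : μ' ≤ -μ ^ 2 / k - k * κ + v) :
    2 * (σ * σ') * μ + σ ^ 2 * μ' - k * (σ' ^ 2 - κ * σ ^ 2) ≤ σ ^ 2 * v := by
  have hscaled := mul_le_mul_of_nonneg_left hric (sq_nonneg σ)
  have hsquare : 2 * σ' * (σ * μ) ≤ k * σ' ^ 2 + k⁻¹ * (σ * μ) ^ 2 := two_mul_le_add_mul_sq hk
  have : σ ^ 2 * (-μ ^ 2 / k) = -(k⁻¹ * (σ * μ) ^ 2) := by ring
  linarith

theorem sq_mul_sub_deriv_le_of_riccati {k c T : ℝ} (hk : 0 < k) (hT : 0 < T)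
    {sn sn' K f f' f'' m m' : ℝ → ℝ}
    (hsn : ∀ t ∈ Icc 0 T, HasDerivWithinAt sn (sn' t) (Icc 0 T) t)
    (hsn' : ∀ t ∈ Icc 0 T, HasDerivWithinAt sn' (-(K t * sn t)) (Icc 0 T) t)
    (hsn0 : sn 0 = 0)
    (hconv : ∀ t ∈ Ioc 0 T, 0 ≤ sn' t ^ 2 - K t * sn t ^ 2)
    (hf : ∀ t ∈ Icc 0 T, HasDerivWithinAt f (f' t) (Icc 0 T) t)
    (hf' : ∀ t ∈ Icc 0 T, HasDerivWithinAt f' (f'' t) (Icc 0 T) t)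
    (hfc : ∀ t ∈ Ioc 0 T, f t ≤ c)
    (hm : ∀ t ∈ Ioc 0 T, HasDerivWithinAt m (m' t) (Ioc 0 T) t)
    (hric : ∀ t ∈ Ioc 0 T, m' t ≤ -(m t) ^ 2 / k - k * K t + f'' t)
    (hlim : Tendsto (fun t => sn t ^ 2 * m t) (nhdsWithin 0 (Ioi 0)) (nhds 0)) :
    sn T ^ 2 * (m T - f' T) ≤ (k + 2 * (c - f T)) * (sn T * sn' T) := by
  have hsub : Ioc 0 T ⊆ Icc 0 T := Ioc_subset_Icc_self
  have hsq t (ht : t ∈ Icc 0 T) := hasDerivWithinAt_sq (hsn t ht)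
  have hmul t (ht : t ∈ Icc 0 T) := hasDerivWithinAt_mul_deriv_of_ode (hsn t ht) (hsn' t ht)
  have hparts t (ht : t ∈ Icc 0 T) :
      HasDerivWithinAt (fun x => sn x ^ 2 * f' x - 2 * (sn x * sn' x) * (f x - c))
        (sn t ^ 2 * f'' t - 2 * (sn' t ^ 2 - K t * sn t ^ 2) * (f t - c)) (Icc 0 T) t :=
    hasDerivWithinAt_mul_deriv_sub_deriv_mul (hsq t ht) ((hmul t ht).const_mul 2)
      ((hf t ht).sub_const c) (hf' t ht)
  have hriccati t (ht : t ∈ Ioc 0 T) :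
      HasDerivWithinAt (fun x => sn x ^ 2 * m x - k * (sn x * sn' x))
        (2 * (sn t * sn' t) * m t + sn t ^ 2 * m' t - k * (sn' t ^ 2 - K t * sn t ^ 2))
        (Ioc 0 T) t :=
    (((hsq t (hsub ht)).mono hsub).fun_mul (hm t ht)).fun_sub
      (((hmul t (hsub ht)).mono hsub).const_mul k)
  have hderiv_le t (ht : t ∈ Ioc 0 T) :
      2 * (sn t * sn' t) * m t + sn t ^ 2 * m' t - k * (sn' t ^ 2 - K t * sn t ^ 2) ≤
        sn t ^ 2 * f'' t - 2 * (sn' t ^ 2 - K t * sn t ^ 2) * (f t - c) := by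
    have := riccati_sq_mul_deriv_le (σ := sn t) (σ' := sn' t) hk (hric t ht)
    have := mul_nonneg (hconv t ht) (sub_nonneg.2 (hfc t ht))
    linarith
  have hboundary : Tendsto (fun t => k * (sn t * sn' t) +
      (sn t ^ 2 * f' t - 2 * (sn t * sn' t) * (f t - c))) (nhdsWithin 0 (Ioi 0)) (nhds 0) := by
    have h0 : (0 : ℝ) ∈ Icc 0 T := left_mem_Icc.2 hT.le
    have := (((hmul 0 h0).const_mul k).fun_add (hparts 0 h0)).continuousWithinAt.mono hsub
    simpa [ContinuousWithinAt, nhdsWithin_Ioc_eq_nhdsGT hT, hsn0] using this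
  have hcompare := le_of_hasDerivWithinAt_le_of_tendsto_sub hT hriccati
    (fun t ht => (hparts t (hsub ht)).mono hsub) hderiv_le
    (by simpa [sub_sub] using hlim.sub hboundary)
  linarith

theorem stmt_13_general {k t₀ : ℝ} (hk : 0 < k) {sn sn' K f φ m m' : ℝ → ℝ}
    (hsn : ∀ t, HasDerivAt sn (sn' t) t)
    (hsn' : ∀ t, HasDerivAt sn' (-(K t * sn t)) t)
    (hsn0 : sn 0 = 0) (hsn_ne : ∀ t ∈ Ioc 0 t₀, sn t ≠ 0)
    (hsq1 : ∀ t ∈ Ioc 0 t₀, 0 ≤ deriv (fun s => sn s ^ 2) t)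
    (hsq2 : ∀ t ∈ Ioc 0 t₀, 0 ≤ deriv (deriv (fun s => sn s ^ 2)) t)
    (hf : Differentiable ℝ f) (hf' : Differentiable ℝ (deriv f))
    (hφ : MonotoneOn φ (Ioc 0 t₀)) (hfφ : ∀ t ∈ Ioc 0 t₀, |f t| ≤ φ t)
    (hm : ∀ t ∈ Ioc 0 t₀, HasDerivWithinAt m (m' t) (Ioc 0 t₀) t)
    (hric : ∀ t ∈ Ioc 0 t₀, m' t ≤ -(m t) ^ 2 / k - k * K t + deriv (deriv f) t)
    (hlim : Tendsto (fun t => sn t ^ 2 * m t) (nhdsWithin 0 (Ioi 0)) (nhds 0)) :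
    ∀ t ∈ Ioc 0 t₀, m t - deriv f t ≤ (1 + 4 * φ t / k) * (k * sn' t / sn t) := by
  intro T hT
  have hsub : Ioc 0 T ⊆ Ioc 0 t₀ := Ioc_subset_Ioc_right hT.2
  have hconv t (ht : t ∈ Ioc 0 T) : 0 ≤ sn' t ^ 2 - K t * sn t ^ 2 := by
    have := hsq2 t (hsub ht)
    rw [deriv_deriv_sq_of_ode hsn (hsn' t)] at this
    linarith
  have hmul_nonneg : 0 ≤ sn T * sn' T := by
    have := hsq1 T hT
    rw [deriv_sq_of_hasDerivAt (hsn T)] at this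
    linarith
  have hbound := sq_mul_sub_deriv_le_of_riccati hk hT.1
    (fun t _ => (hsn t).hasDerivWithinAt) (fun t _ => (hsn' t).hasDerivWithinAt) hsn0 hconv
    (fun t _ => (hf t).hasDerivAt.hasDerivWithinAt)
    (fun t _ => (hf' t).hasDerivAt.hasDerivWithinAt)
    (fun t ht => (le_abs_self _).trans ((hfφ t (hsub ht)).trans (hφ (hsub ht) hT ht.2)))
    (fun t ht => (hm t (hsub ht)).mono hsub) (fun t ht => hric t (hsub ht)) hlim
  have hosc : k + 2 * (φ T - f T) ≤ k + 4 * φ T := by linarith [(abs_le.1 (hfφ T hT)).1]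
  have hsn_T := hsn_ne T hT
  calc m T - deriv f T ≤ (k + 4 * φ T) * (sn T * sn' T) / sn T ^ 2 := by
        rw [le_div_iff₀' (by positivity)]
        exact hbound.trans (mul_le_mul_of_nonneg_right hosc hmul_nonneg)
    _ = (1 + 4 * φ T / k) * (k * sn' T / sn T) := by field_simp

/-- Analytic content of Theorem 2.1 (f-mean curvature comparison under `|f| ≤ δ(t+1)`):
if `m` satisfies the Riccati inequality `m' ≤ −m²/(n−1) − (n−1)H + f''` with the model
solution `sn` of `sn'' + H sn = 0`, `sn(0) = 0`, `sn'(0) = 1`, and `sn²` is monotone and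
convex on `[0, t₀]`, then `m_f = m − f' ≤ (1 + 4δ(t+1)/(n−1))·(n−1)·sn'/sn`. -/
theorem stmt_13 (n : ℕ) (hn : 2 ≤ n) (H δ t₀ : ℝ) (hδ : 0 < δ) (ht₀ : 0 < t₀)
    (sn sn' : ℝ → ℝ)
    (hsn1 : ∀ t, HasDerivAt sn (sn' t) t)
    (hsn2 : ∀ t, HasDerivAt sn' (-(H * sn t)) t)
    (hsn0 : sn 0 = 0) (hsn'0 : sn' 0 = 1)
    (hsnpos : ∀ t ∈ Ioc 0 t₀, 0 < sn t)
    (hsq1 : ∀ t ∈ Icc 0 t₀, 0 ≤ deriv (fun s => sn s ^ 2) t)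
    (hsq2 : ∀ t ∈ Icc 0 t₀, 0 ≤ deriv (deriv (fun s => sn s ^ 2)) t)
    (f : ℝ → ℝ) (hf : ContDiff ℝ 2 f)
    (hfb : ∀ t ∈ Icc 0 t₀, |f t| ≤ δ * (t + 1))
    (m m' : ℝ → ℝ)
    (hm : ∀ t ∈ Ioc 0 t₀, HasDerivWithinAt m (m' t) (Ioc 0 t₀) t)
    (hric : ∀ t ∈ Ioc 0 t₀,
      m' t ≤ -(m t) ^ 2 / ((n : ℝ) - 1) - ((n : ℝ) - 1) * H + deriv (deriv f) t)
    (hlim : Tendsto (fun t => sn t ^ 2 * m t) (nhdsWithin 0 (Ioi 0)) (nhds 0)) :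
    ∀ t ∈ Ioc 0 t₀,
      m t - deriv f t
        ≤ (1 + 4 * δ * (t + 1) / ((n : ℝ) - 1)) * (((n : ℝ) - 1) * sn' t / sn t) := by
  have hk : (0 : ℝ) < n - 1 := sub_pos.2 (by exact_mod_cast hn)
  have hφ : Monotone fun t => δ * (t + 1) := (monotone_id.add_const 1).const_mul hδ.le
  simpa only [mul_assoc] using stmt_13_general hk hsn1 hsn2 hsn0 (fun t ht => (hsnpos t ht).ne')
    (fun t ht => hsq1 t (Ioc_subset_Icc_self ht)) (fun t ht => hsq2 t (Ioc_subset_Icc_self ht))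
    (hf.differentiable two_ne_zero) hf.differentiable_deriv_two (hφ.monotoneOn _)
    (fun t ht => hfb t (Ioc_subset_Icc_self ht)) hm hric hlim
end

section
/- Let n ≥ 2 be a natural number, H a real number, a ≥ 0 and t₀ > 0. Let sn : ℝ → ℝ be twice differentiable with sn''(t) = −H·sn(t) for all t, sn(0) = 0 and sn'(0) = 1, and assume sn(t) > 0 for all t ∈ (0, t₀] and that the function t ↦ sn(t)² has nonnegative first derivative at every t ∈ [0, t₀]. Let f : ℝ → ℝ be twice continuously differentiable with f'(t) ≥ −a for all t ∈ [0, t₀]. Let m : ℝ → ℝ be differentiable on (0, t₀] with m'(t) ≤ −m(t)²/(n−1) − (n−1)H + f''(t) for all t ∈ (0, t₀], and suppose sn(t)²·m(t) → 0 as t → 0⁺. Then for every t ∈ (0, t₀], m(t) − f'(t) ≤ (n−1)·sn'(t)/sn(t) + a. -/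
open Set Filter

/-!
Let `s'' = -κ * s` with `s 0 = 0`, let `m_H = N * s' / s` be the model mean curvature, and let `g`
be the radial derivative of the weight, so that `m - g` is the weighted mean curvature.
Multiplying the Riccati inequality by `s ^ 2` and completing the square gives
`(s ^ 2 * m)' ≤ (s ^ 2 * m_H)' + s ^ 2 * g'`. Since `s ^ 2` is nondecreasing and `g + a ≥ 0`, also
`s ^ 2 * g' ≤ (s ^ 2 * (g + a))'`. So `s ^ 2 * (m - g - a - m_H)` is nonincreasing, and it tends to
`0` at the base point; hence it is nonpositive.
-/

open scoped Topology

theorem le_of_antitoneOn_Ioc_of_tendsto_nhdsGT {α β : Type*} [LinearOrder α] [DenselyOrdered α]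
    [TopologicalSpace α] [OrderTopology α] [Preorder β] [TopologicalSpace β] [ClosedIciTopology β]
    {φ : α → β} {b c x : α} {l : β} (hφ : AntitoneOn φ (Ioc b c)) (hl : Tendsto φ (𝓝[>] b) (𝓝 l))
    (hx : x ∈ Ioc b c) : φ x ≤ l := by
  have : (𝓝[>] b).NeBot := nhdsGT_neBot_of_exists_gt ⟨x, hx.1⟩
  refine ge_of_tendsto hl ?_
  filter_upwards [Ioc_mem_nhdsGT hx.1] with y hy
  exact hφ ⟨hy.1, hy.2.trans hx.2⟩ hx hy.2

theorem nonneg_of_deriv_sq_nonneg {s : ℝ → ℝ} {v t : ℝ} (hs : HasDerivAt s v t) (hpos : 0 < s t)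
    (hsq : 0 ≤ deriv (fun u => s u ^ 2) t) : 0 ≤ v := by
  have hderiv : deriv (fun u => s u ^ 2) t = 2 * s t * v := by
    simpa using (hs.fun_pow 2).deriv
  rw [hderiv] at hsq
  exact nonneg_of_mul_nonneg_right hsq (by positivity)

/-- The quantity `s ^ 2 * (m_g - a - m_H)`, where `m_g = m - g` is the weighted mean curvature
(`g` being the radial derivative of the weight) and `m_H = N * s' / s` is the model mean curvature,
expanded so that it does not divide by `s`. Its sign decides the mean curvature comparison. -/
def comparisonDefect (N a : ℝ) (s s' g m : ℝ → ℝ) (t : ℝ) : ℝ :=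
  s t ^ 2 * (m t - g t - a) - N * (s t * s' t)

section

variable {N a : ℝ} {s s' g m : ℝ → ℝ}

theorem comparisonDefect_nonpos_iff {t : ℝ} (hs : s t ≠ 0) :
    comparisonDefect N a s s' g m t ≤ 0 ↔ m t - g t ≤ N * s' t / s t + a := by
  have hfactor : comparisonDefect N a s s' g m t =
      s t ^ 2 * (m t - g t) - s t ^ 2 * (N * s' t / s t + a) := by
    unfold comparisonDefect
    field_simp
    ring
  rw [hfactor, sub_nonpos, mul_le_mul_iff_right₀ (by positivity)]

theorem hasDerivWithinAt_comparisonDefect {s'' g' m' t : ℝ} {S : Set ℝ}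
    (hs : HasDerivWithinAt s (s' t) S t) (hs' : HasDerivWithinAt s' s'' S t)
    (hg : HasDerivWithinAt g g' S t) (hm : HasDerivWithinAt m m' S t) :
    HasDerivWithinAt (comparisonDefect N a s s' g m)
      (2 * s t * s' t * (m t - g t - a) + s t ^ 2 * (m' - g') - N * (s' t ^ 2 + s t * s''))
      S t := by
  refine (((hs.fun_pow 2).mul ((hm.sub hg).sub_const a)).sub
    ((hs.mul hs').const_mul N)).congr_deriv ?_
  simp only [Pi.sub_apply]
  push_cast
  ring

theorem tendsto_comparisonDefect {l : Filter ℝ} {c d : ℝ} (hs : Tendsto s l (𝓝 0))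
    (hs' : Tendsto s' l (𝓝 c)) (hg : Tendsto g l (𝓝 d))
    (hm : Tendsto (fun t => s t ^ 2 * m t) l (𝓝 0)) :
    Tendsto (comparisonDefect N a s s' g m) l (𝓝 0) := by
  have hlim := (hm.sub ((hs.pow 2).mul (hg.add_const a))).sub ((hs.mul hs').const_mul N)
  convert hlim using 2
  · unfold comparisonDefect
    ring
  · ring

end

theorem two_mul_add_sq_mul_le_of_riccati {N k s v m m' q : ℝ} (hN : 0 < N)
    (hric : m' ≤ -m ^ 2 / N - N * k + q) :
    2 * s * v * m + s ^ 2 * m' ≤ N * (v ^ 2 - k * s ^ 2) + s ^ 2 * q := by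
  have hcross : 2 * v * (s * m) ≤ N * v ^ 2 + N⁻¹ * (s * m) ^ 2 := two_mul_le_add_mul_sq hN
  calc 2 * s * v * m + s ^ 2 * m'
      ≤ 2 * v * (s * m) + s ^ 2 * (-m ^ 2 / N - N * k + q) := by
        linarith [mul_le_mul_of_nonneg_left hric (sq_nonneg s)]
    _ ≤ N * v ^ 2 + N⁻¹ * (s * m) ^ 2 + s ^ 2 * (-m ^ 2 / N - N * k + q) := by gcongr
    _ = N * (v ^ 2 - k * s ^ 2) + s ^ 2 * q := by ring

section

variable {N a T : ℝ} {κ s s' g g' m m' : ℝ → ℝ}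

theorem antitoneOn_comparisonDefect {S : Set ℝ} (hS : Convex ℝ S) (hN : 0 < N)
    (hs : ∀ t ∈ S, HasDerivWithinAt s (s' t) S t)
    (hs' : ∀ t ∈ S, HasDerivWithinAt s' (-(κ t * s t)) S t)
    (hmono : ∀ t ∈ S, 0 ≤ s t * s' t)
    (hg : ∀ t ∈ S, HasDerivWithinAt g (g' t) S t)
    (hga : ∀ t ∈ S, -a ≤ g t)
    (hm : ∀ t ∈ S, HasDerivWithinAt m (m' t) S t)
    (hric : ∀ t ∈ S, m' t ≤ -(m t) ^ 2 / N - N * κ t + g' t) :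
    AntitoneOn (comparisonDefect N a s s' g m) S := by
  have hderiv := fun t ht => hasDerivWithinAt_comparisonDefect (N := N) (a := a)
    (hs t ht) (hs' t ht) (hg t ht) (hm t ht)
  refine antitoneOn_of_hasDerivWithinAt_nonpos hS
    (fun t ht => (hderiv t ht).continuousWithinAt)
    (fun t ht => (hderiv t (interior_subset ht)).mono interior_subset) fun t ht => ?_
  replace ht := interior_subset ht
  have hdrift : 0 ≤ s t * s' t * (g t + a) :=
    mul_nonneg (hmono t ht) (by linarith [hga t ht])
  linarith [two_mul_add_sq_mul_le_of_riccati (s := s t) (v := s' t) hN (hric t ht)]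

theorem stmt_14_general (hN : 0 < N)
    (hs : ∀ t ∈ Icc 0 T, HasDerivWithinAt s (s' t) (Icc 0 T) t)
    (hs' : ∀ t ∈ Icc 0 T, HasDerivWithinAt s' (-(κ t * s t)) (Icc 0 T) t)
    (hs0 : s 0 = 0) (hspos : ∀ t ∈ Ioc 0 T, 0 < s t) (hs'nonneg : ∀ t ∈ Ioc 0 T, 0 ≤ s' t)
    (hg : ∀ t ∈ Icc 0 T, HasDerivWithinAt g (g' t) (Icc 0 T) t)
    (hga : ∀ t ∈ Ioc 0 T, -a ≤ g t)
    (hm : ∀ t ∈ Ioc 0 T, HasDerivWithinAt m (m' t) (Ioc 0 T) t)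
    (hric : ∀ t ∈ Ioc 0 T, m' t ≤ -(m t) ^ 2 / N - N * κ t + g' t)
    (hlim : Tendsto (fun t => s t ^ 2 * m t) (𝓝[>] 0) (𝓝 0)) :
    ∀ t ∈ Ioc 0 T, m t - g t ≤ N * s' t / s t + a := by
  intro t ht
  have hT : 0 < T := ht.1.trans_le ht.2
  have restrict {φ φ' : ℝ → ℝ} (hφ : ∀ u ∈ Icc 0 T, HasDerivWithinAt φ (φ' u) (Icc 0 T) u) :
      ∀ u ∈ Ioc 0 T, HasDerivWithinAt φ (φ' u) (Ioc 0 T) u :=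
    fun u hu => (hφ u (Ioc_subset_Icc_self hu)).mono Ioc_subset_Icc_self
  have limit {φ φ' : ℝ → ℝ} (hφ : ∀ u ∈ Icc 0 T, HasDerivWithinAt φ (φ' u) (Icc 0 T) u) :
      Tendsto φ (𝓝[>] 0) (𝓝 (φ 0)) :=
    (hφ 0 (left_mem_Icc.2 hT.le)).continuousWithinAt.mono_left
      (nhdsWithin_le_of_mem (Icc_mem_nhdsGT hT))
  have hanti : AntitoneOn (comparisonDefect N a s s' g m) (Ioc 0 T) :=
    antitoneOn_comparisonDefect (convex_Ioc 0 T) hN (restrict hs) (restrict hs')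
      (fun u hu => mul_nonneg (hspos u hu).le (hs'nonneg u hu)) (restrict hg) hga hm hric
  have hzero : Tendsto (comparisonDefect N a s s' g m) (𝓝[>] 0) (𝓝 0) :=
    tendsto_comparisonDefect (by simpa only [hs0] using limit hs) (limit hs') (limit hg) hlim
  exact (comparisonDefect_nonpos_iff (hspos t ht).ne').1
    (le_of_antitoneOn_Ioc_of_tendsto_nhdsGT hanti hzero ht)

end

/-- Analytic content of Theorem 2.2 (Wei–Wylie's f-mean curvature comparison under
`∂_t f ≥ −a`): if `m` satisfies the Riccati inequality `m' ≤ −m²/(n−1) − (n−1)H + f''`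
with the model solution `sn` of `sn'' + H sn = 0`, `sn(0) = 0`, `sn'(0) = 1`, and `sn²`
is monotone on `[0, t₀]`, then `m_f = m − f' ≤ (n−1)·sn'/sn + a`. -/
theorem stmt_14 (n : ℕ) (hn : 2 ≤ n) (H a t₀ : ℝ) (ha : 0 ≤ a) (ht₀ : 0 < t₀)
    (sn sn' : ℝ → ℝ)
    (hsn1 : ∀ t, HasDerivAt sn (sn' t) t)
    (hsn2 : ∀ t, HasDerivAt sn' (-(H * sn t)) t)
    (hsn0 : sn 0 = 0) (hsn'0 : sn' 0 = 1)
    (hsnpos : ∀ t ∈ Ioc 0 t₀, 0 < sn t)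
    (hsq1 : ∀ t ∈ Icc 0 t₀, 0 ≤ deriv (fun s => sn s ^ 2) t)
    (f : ℝ → ℝ) (hf : ContDiff ℝ 2 f)
    (hfb : ∀ t ∈ Icc 0 t₀, -a ≤ deriv f t)
    (m m' : ℝ → ℝ)
    (hm : ∀ t ∈ Ioc 0 t₀, HasDerivWithinAt m (m' t) (Ioc 0 t₀) t)
    (hric : ∀ t ∈ Ioc 0 t₀,
      m' t ≤ -(m t) ^ 2 / ((n : ℝ) - 1) - ((n : ℝ) - 1) * H + deriv (deriv f) t)
    (hlim : Tendsto (fun t => sn t ^ 2 * m t) (nhdsWithin 0 (Ioi 0)) (nhds 0)) :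
    ∀ t ∈ Ioc 0 t₀,
      m t - deriv f t ≤ ((n : ℝ) - 1) * sn' t / sn t + a := by
  have hf' (t : ℝ) : HasDerivAt (deriv f) (deriv (deriv f) t) t :=
    (hf.differentiable_deriv_two t).hasDerivAt
  exact stmt_14_general (sub_pos.2 (by exact_mod_cast hn))
    (fun t _ => (hsn1 t).hasDerivWithinAt) (fun t _ => (hsn2 t).hasDerivWithinAt) hsn0 hsnpos
    (fun t ht => nonneg_of_deriv_sq_nonneg (hsn1 t) (hsnpos t ht)
      (hsq1 t (Ioc_subset_Icc_self ht)))
    (fun t _ => (hf' t).hasDerivWithinAt) (fun t ht => hfb t (Ioc_subset_Icc_self ht))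
    hm hric hlim
end

section
/- Let n ≥ 2 be a natural number and let C > 0 and α > 1 be real numbers. Then there do not exist a continuous function m : ℝ → ℝ and a function g : ℝ → ℝ with g(t) ≤ C·(1 − 1/t^α) for all t ≥ 1, such that −m(t) − (1/(n−1))·∫₁ᵗ m(s)² ds + g(t) → ∞ as t → ∞. -/
open MeasureTheory Filter

/-!
If the expression tends to infinity while `g` stays bounded above, then from some time `T` on
`|m t| ≥ 1 + k ∫_T^t m²`, where `k = 1 / (n - 1)`. The right-hand side `u` satisfies
`u' = k m² ≥ k u²`, and such a function blows up no later than time `T + 1 / k`.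
-/

section Riccati

variable {k c a b : ℝ}

theorem mul_sub_lt_inv_of_mul_sq_le_deriv {v v' : ℝ → ℝ} (hab : a ≤ b)
    (hcont : ContinuousOn v (Set.Icc a b)) (hpos : ∀ t ∈ Set.Icc a b, 0 < v t)
    (hderiv : ∀ t ∈ Set.Ioo a b, HasDerivAt v (v' t) t)
    (hle : ∀ t ∈ Set.Ioo a b, k * v t ^ 2 ≤ v' t) :
    k * (b - a) < (v a)⁻¹ := by
  have hpos' : ∀ t ∈ Set.Ioo a b, 0 < v t := fun t ht => hpos t (Set.Ioo_subset_Icc_self ht)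
  have hderiv_inv : ∀ t ∈ Set.Ioo a b, HasDerivAt (fun s => -(v s)⁻¹) (v' t / v t ^ 2) t := by
    intro t ht
    simpa only [neg_div, neg_neg] using ((hderiv t ht).fun_inv (hpos' t ht).ne').fun_neg
  have hdiff : DifferentiableOn ℝ (fun s => -(v s)⁻¹) (interior (Set.Icc a b)) := by
    rw [interior_Icc]
    exact fun t ht => (hderiv_inv t ht).differentiableAt.differentiableWithinAt
  have hderiv_ge : ∀ t ∈ interior (Set.Icc a b), k ≤ deriv (fun s => -(v s)⁻¹) t := by
    rw [interior_Icc]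
    intro t ht
    rw [(hderiv_inv t ht).deriv, le_div_iff₀ (pow_pos (hpos' t ht) 2)]
    exact hle t ht
  have hincrement : k * (b - a) ≤ -(v b)⁻¹ - -(v a)⁻¹ :=
    (convex_Icc a b).mul_sub_le_image_sub_of_le_deriv
      (hcont.inv₀ fun t ht => (hpos t ht).ne').neg hdiff hderiv_ge
      a (Set.left_mem_Icc.2 hab) b (Set.right_mem_Icc.2 hab) hab
  have hinv_pos : 0 < (v b)⁻¹ := inv_pos.2 (hpos b (Set.right_mem_Icc.2 hab))
  linarith

theorem le_add_mul_integral_sq (hk : 0 ≤ k) (hab : a ≤ b) (w : ℝ → ℝ) :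
    c ≤ c + k * ∫ s in a..b, w s ^ 2 :=
  le_add_of_nonneg_right <|
    mul_nonneg hk (intervalIntegral.integral_nonneg hab fun _ _ => sq_nonneg _)

theorem continuousOn_add_mul_integral {w : ℝ → ℝ} (hab : a ≤ b)
    (hw : IntervalIntegrable w volume a b) :
    ContinuousOn (fun t => c + k * ∫ s in a..t, w s) (Set.Icc a b) := by
  have hprim := intervalIntegral.continuousOn_primitive_interval' hw Set.left_mem_uIcc
  rw [Set.uIcc_of_le hab] at hprim
  exact (hprim.const_mul k).const_add c

theorem mul_sub_lt_inv_of_add_mul_integral_sq_le {u : ℝ → ℝ} (hk : 0 ≤ k) (hc : 0 < c)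
    (hab : a ≤ b) (hu : ContinuousOn u (Set.Icc a b))
    (hle : ∀ t ∈ Set.Icc a b, c + k * (∫ s in a..t, u s ^ 2) ≤ u t) :
    k * (b - a) < c⁻¹ := by
  have husq : ContinuousOn (fun s => u s ^ 2) (Set.Icc a b) := hu.pow 2
  have hpos : ∀ t ∈ Set.Icc a b, 0 < c + k * ∫ s in a..t, u s ^ 2 :=
    fun t ht => hc.trans_le (le_add_mul_integral_sq hk ht.1 u)
  have hderiv : ∀ t ∈ Set.Ioo a b,
      HasDerivAt (fun r => c + k * ∫ s in a..r, u s ^ 2) (k * u t ^ 2) t := by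
    intro t ht
    have hint : IntervalIntegrable (fun s => u s ^ 2) volume a t :=
      (husq.mono (Set.Icc_subset_Icc_right ht.2.le)).intervalIntegrable_of_Icc ht.1.le
    have hmeas := (husq.mono Set.Ioo_subset_Icc_self).stronglyMeasurableAtFilter isOpen_Ioo
      (μ := volume) t ht
    exact ((intervalIntegral.integral_hasDerivAt_right hint hmeas
      (husq.continuousAt (Icc_mem_nhds ht.1 ht.2))).const_mul k).const_add c
  have hsq_le : ∀ t ∈ Set.Ioo a b, k * (c + k * ∫ s in a..t, u s ^ 2) ^ 2 ≤ k * u t ^ 2 := by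
    intro t ht
    have ht' := Set.Ioo_subset_Icc_self ht
    gcongr
    · exact (hpos t ht').le
    · exact hle t ht'
  simpa only [intervalIntegral.integral_same, mul_zero, add_zero] using
    mul_sub_lt_inv_of_mul_sq_le_deriv hab
      (continuousOn_add_mul_integral hab (husq.intervalIntegrable_of_Icc hab)) hpos hderiv hsq_le

theorem mul_sub_lt_inv_of_add_mul_integral_sq_le_abs {m : ℝ → ℝ} (hk : 0 ≤ k) (hc : 0 < c)
    (hab : a ≤ b) (hm : IntervalIntegrable (fun s => m s ^ 2) volume a b)
    (hle : ∀ t ∈ Set.Icc a b, c + k * (∫ s in a..t, m s ^ 2) ≤ |m t|) :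
    k * (b - a) < c⁻¹ := by
  -- `m` may be discontinuous, but its primitive is not and satisfies the same type of inequality.
  have hcont : ContinuousOn (fun t => c + k * ∫ s in a..t, m s ^ 2) (Set.Icc a b) :=
    continuousOn_add_mul_integral hab hm
  refine mul_sub_lt_inv_of_add_mul_integral_sq_le hk hc hab hcont fun t ht => ?_
  have hsubset : Set.Icc a t ⊆ Set.Icc a b := Set.Icc_subset_Icc_right ht.2
  gcongr c + k * ?_
  refine intervalIntegral.integral_mono_on ht.1
    (((hcont.mono hsubset).pow 2).intervalIntegrable_of_Icc ht.1)
    (hm.mono_set (by rwa [Set.uIcc_of_le ht.1, Set.uIcc_of_le hab])) fun s hs => ?_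
  rw [← sq_abs (m s)]
  gcongr
  · exact hc.le.trans (le_add_mul_integral_sq hk hs.1 m)
  · exact hle s (hsubset hs)

end Riccati

theorem stmt_17_general {k a : ℝ} (hk : 0 < k) {m g : ℝ → ℝ}
    (hm : ∀ t, a ≤ t → IntervalIntegrable (fun s => m s ^ 2) volume a t)
    (hg : IsBoundedUnder (· ≤ ·) atTop g) :
    ¬ Tendsto (fun t => -m t - k * (∫ s in a..t, m s ^ 2) + g t) atTop atTop := by
  intro htop
  obtain ⟨B, hB⟩ := hg.eventually_le
  obtain ⟨T, haT, hT⟩ : ∃ T, a ≤ T ∧ ∀ t, T ≤ t → 1 + k * (∫ s in a..t, m s ^ 2) ≤ |m t| := by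
    refine ((eventually_ge_atTop a).and (eventually_forall_ge_atTop.2 ?_)).exists
    filter_upwards [hB, htop.eventually_ge_atTop (B + 1)] with t hgt hlarge
    linarith [neg_le_abs (m t)]
  have hTb : T ≤ T + k⁻¹ := le_add_of_nonneg_right (inv_nonneg.2 hk.le)
  have hTint : IntervalIntegrable (fun s => m s ^ 2) volume T (T + k⁻¹) :=
    (hm T haT).symm.trans (hm _ (haT.trans hTb))
  have hblowup := mul_sub_lt_inv_of_add_mul_integral_sq_le_abs hk.le one_pos hTb hTint
    fun t ht => le_trans ?_ (hT t ht.1)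
  · rw [add_sub_cancel_left, mul_inv_cancel₀ hk.ne', inv_one] at hblowup
    exact hblowup.false
  · gcongr 1 + k * ?_
    exact intervalIntegral.integral_mono_interval haT ht.1 le_rfl
      (ae_of_all _ fun _ => sq_nonneg _) (hm t (haT.trans ht.1))

theorem mul_one_sub_one_div_rpow_le {C t : ℝ} (hC : 0 ≤ C) (ht : 0 ≤ t) (α : ℝ) :
    C * (1 - 1 / t ^ α) ≤ C :=
  mul_le_of_le_one_right hC (sub_le_self 1 (one_div_nonneg.2 (Real.rpow_nonneg ht α)))

/-- Analytic core of the Ambrose-type Theorem 1.11: there is no continuous `m` and no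
`g` with `g(t) ≤ C(1 − 1/t^α)` for `t ≥ 1` such that
`−m(t) − (1/(n−1))·∫₁ᵗ m² + g(t) → ∞` as `t → ∞`. -/
theorem stmt_17 (n : ℕ) (hn : 2 ≤ n) (C α : ℝ) (hC : 0 < C) (hα : 1 < α) :
    ¬ ∃ m g : ℝ → ℝ, Continuous m ∧
      (∀ t, 1 ≤ t → g t ≤ C * (1 - 1 / t ^ α)) ∧
      Tendsto (fun t => -m t - (1 / ((n : ℝ) - 1)) * (∫ s in (1 : ℝ)..t, (m s) ^ 2) + g t)
        atTop atTop := by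
  rintro ⟨m, g, hm, hg, htop⟩
  have hn' : (1 : ℝ) < n := by exact_mod_cast hn
  have hg_bdd : IsBoundedUnder (· ≤ ·) atTop g := by
    refine isBoundedUnder_of_eventually_le (a := C) ((eventually_ge_atTop 1).mono fun t ht => ?_)
    exact (hg t ht).trans (mul_one_sub_one_div_rpow_le hC.le (zero_le_one.trans ht) α)
  exact stmt_17_general (one_div_pos.2 (sub_pos.2 hn'))
    (fun t _ => (hm.pow 2).intervalIntegrable 1 t) hg_bdd htop
end
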